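/- arXiv:1607.02563 — 3 statements merged into one kernel-verified Lean document; each statement's English description precedes it below -/
import Mathlib

section
/- Let B be a real separable Banach space, (Ω, 𝓕, ℙ) a probability space, and X : B × Ω → B jointly measurable; write X^x := X(x,·). Define the Markov operator P f(x) := E[f(X^x)] for bounded measurable f : B → ℝ, and assume the probability measure μ on B is invariant for P, i.e. ∫_B P f dμ = ∫_B f dμ for all bounded measurable f. Fix k ∈ B. Suppose there is a jointly measurable family M : B × Ω → ℝ with ∫_B E[M_x²] μ(dx) < ∞ such that the integration by parts formula E[(∂_k f)(X^x)] = E[f(X^x) M_x] holds for every f ∈ C_b²(B) and μ-a.e. x ∈ B. Then the form (ℰ_k, C_b²(B)) is closable in L²(μ): whenever a sequence (f_n) ⊂ C_b²(B) satisfies f_n → 0 in L²(μ) and ∂_k f_n → Z in L²(μ) for some Z ∈ L²(μ), one has Z = 0 in L²(μ). -/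
open MeasureTheory Filter

/-- `f ∈ C_b²(B)`: `f` is twice continuously Fréchet differentiable, bounded, with bounded
first and second Fréchet derivatives. -/
def IsCb2 {B : Type*} [NormedAddCommGroup B] [NormedSpace ℝ B] (f : B → ℝ) : Prop :=
  ContDiff ℝ 2 f ∧ (∃ c, ∀ x, |f x| ≤ c) ∧ (∃ c, ∀ x, ‖fderiv ℝ f x‖ ≤ c) ∧
    (∃ c, ∀ x, ‖fderiv ℝ (fderiv ℝ f) x‖ ≤ c)

lemma cb2_bdd_smul {B E : Type*} [NormedAddCommGroup B] [NormedSpace ℝ B]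
    [NormedAddCommGroup E] [NormedSpace ℝ E] {F : B → ℝ} {G : B → E}
    (hF : Differentiable ℝ F) (hG : Differentiable ℝ G)
    (bF : ∃ c, ∀ x, |F x| ≤ c) (bG : ∃ c, ∀ x, ‖G x‖ ≤ c)
    (bF' : ∃ c, ∀ x, ‖fderiv ℝ F x‖ ≤ c) (bG' : ∃ c, ∀ x, ‖fderiv ℝ G x‖ ≤ c) :
    ∃ c, ∀ x, ‖fderiv ℝ (fun y => F y • G y) x‖ ≤ c := by
  obtain ⟨a, ha⟩ := bF
  obtain ⟨b, hb⟩ := bG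
  obtain ⟨a', ha'⟩ := bF'
  obtain ⟨b', hb'⟩ := bG'
  refine ⟨a * b' + a' * b, fun x => ?_⟩
  rw [fderiv_fun_smul (hF x) (hG x)]
  refine (norm_add_le _ _).trans (add_le_add ?_ ?_)
  · rw [norm_smul]
    exact mul_le_mul (ha x) (hb' x) (norm_nonneg _) ((abs_nonneg _).trans (ha x))
  · rw [ContinuousLinearMap.norm_smulRight_apply]
    exact mul_le_mul (ha' x) (hb x) (norm_nonneg _) ((norm_nonneg _).trans (ha' x))

lemma IsCb2.mul {B : Type*} [NormedAddCommGroup B] [NormedSpace ℝ B] {f g : B → ℝ}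
    (hf : IsCb2 f) (hg : IsCb2 g) : IsCb2 (fun x => f x * g x) := by
  obtain ⟨f0, f1, f2, f3⟩ := hf
  obtain ⟨g0, g1, g2, g3⟩ := hg
  have df : Differentiable ℝ f := f0.differentiable (by norm_num)
  have dg : Differentiable ℝ g := g0.differentiable (by norm_num)
  have df' : Differentiable ℝ (fderiv ℝ f) :=
    (f0.fderiv_right (m := 1) (by norm_num)).differentiable (by norm_num)
  have dg' : Differentiable ℝ (fderiv ℝ g) :=
    (g0.fderiv_right (m := 1) (by norm_num)).differentiable (by norm_num)
  refine ⟨f0.mul g0, ?_, ?_, ?_⟩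
  · obtain ⟨a, ha⟩ := f1
    obtain ⟨b, hb⟩ := g1
    refine ⟨a * b, fun x => ?_⟩
    rw [abs_mul]
    exact mul_le_mul (ha x) (hb x) (abs_nonneg _) ((abs_nonneg _).trans (ha x))
  · exact cb2_bdd_smul df dg f1 g1 f2 g2
  · obtain ⟨a, ha⟩ := cb2_bdd_smul df dg' f1 g2 f2 g3
    obtain ⟨b, hb⟩ := cb2_bdd_smul dg df' g1 f2 g2 f3
    refine ⟨a + b, fun x => ?_⟩
    have : fderiv ℝ (fun x => f x * g x)
        = fun x => f x • fderiv ℝ g x + g x • fderiv ℝ f x := by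
      funext x
      rw [fderiv_fun_mul (df x) (dg x)]
    have d1 : DifferentiableAt ℝ (fun x => f x • fderiv ℝ g x) x := (df x).smul (dg' x)
    have d2 : DifferentiableAt ℝ (fun x => g x • fderiv ℝ f x) x := (dg x).smul (df' x)
    rw [this, fderiv_fun_add d1 d2]
    exact (norm_add_le _ _).trans (add_le_add (ha x) (hb x))

lemma isCb2_trig {B : Type*} [NormedAddCommGroup B] [NormedSpace ℝ B] (l : B →L[ℝ] ℝ)
    (u v : ℝ → ℝ) (hu : ContDiff ℝ 2 u) (b0 : ∀ t, |u t| ≤ 1) (b1 : ∀ t, |v t| ≤ 1)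
    (w : ℝ → ℝ) (b2 : ∀ t, |w t| ≤ 1)
    (h1 : ∀ t, HasDerivAt u (v t) t) (h2 : ∀ t, HasDerivAt v (w t) t) :
    IsCb2 (fun x => u (l x)) := by
  have key : ∀ (p q : ℝ → ℝ), (∀ t, HasDerivAt p (q t) t) → ∀ x,
      HasFDerivAt (fun x => p (l x)) (q (l x) • l) x :=
    fun p q h x => (h (l x)).comp_hasFDerivAt x l.hasFDerivAt
  have e : fderiv ℝ (fun x => u (l x)) = fun x => v (l x) • l :=
    funext fun x => (key u v h1 x).fderiv
  refine ⟨hu.comp l.contDiff, ⟨1, fun x => b0 _⟩, ⟨‖l‖, fun x => ?_⟩, ?_⟩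
  · rw [e, norm_smul]
    exact mul_le_of_le_one_left (norm_nonneg _) (b1 _)
  · rw [e]
    refine cb2_bdd_smul (fun x => (key v w h2 x).differentiableAt) (differentiable_const l)
      ⟨1, fun x => b1 _⟩ ⟨‖l‖, fun x => le_rfl⟩ ⟨‖l‖, fun x => ?_⟩ ⟨0, fun x => ?_⟩
    · rw [(key v w h2 x).fderiv, norm_smul]
      exact mul_le_of_le_one_left (norm_nonneg _) (b2 _)
    · simp

lemma isCb2_cos {B : Type*} [NormedAddCommGroup B] [NormedSpace ℝ B] (l : B →L[ℝ] ℝ) :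
    IsCb2 (fun x => Real.cos (l x)) :=
  isCb2_trig l Real.cos (fun t => -Real.sin t) Real.contDiff_cos Real.abs_cos_le_one
    (fun t => by rw [abs_neg]; exact Real.abs_sin_le_one t) (fun t => -Real.cos t)
    (fun t => by rw [abs_neg]; exact Real.abs_cos_le_one t)
    Real.hasDerivAt_cos (fun t => (Real.hasDerivAt_sin t).neg)

lemma isCb2_sin {B : Type*} [NormedAddCommGroup B] [NormedSpace ℝ B] (l : B →L[ℝ] ℝ) :
    IsCb2 (fun x => Real.sin (l x)) :=
  isCb2_trig l Real.sin Real.cos Real.contDiff_sin Real.abs_sin_le_one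
    Real.abs_cos_le_one (fun t => -Real.sin t)
    (fun t => by rw [abs_neg]; exact Real.abs_sin_le_one t)
    Real.hasDerivAt_sin Real.hasDerivAt_cos

lemma sq_integral_mul_le {α : Type*} [MeasurableSpace α] {ν : Measure α} {a b : α → ℝ}
    (ha : MemLp a 2 ν) (hb : MemLp b 2 ν) :
    (∫ x, a x * b x ∂ν) ^ 2 ≤ (∫ x, a x ^ 2 ∂ν) * ∫ x, b x ^ 2 ∂ν := by
  have iab : Integrable (fun x => a x * b x) ν := ha.integrable_mul hb
  have h : ∀ t : ℝ, 0 ≤ (∫ x, b x ^ 2 ∂ν) * (t * t) + (2 * ∫ x, a x * b x ∂ν) * t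
      + ∫ x, a x ^ 2 ∂ν := by
    intro t
    have h0 : 0 ≤ ∫ x, (b x ^ 2 * (t * t) + a x * b x * (2 * t) + a x ^ 2) ∂ν := by
      apply integral_nonneg
      intro x
      show 0 ≤ b x ^ 2 * (t * t) + a x * b x * (2 * t) + a x ^ 2
      nlinarith [sq_nonneg (b x * t + a x)]
    have i1 : Integrable (fun x => b x ^ 2 * (t * t) + a x * b x * (2 * t)) ν :=
      (hb.integrable_sq.mul_const _).add (iab.mul_const _)
    rw [integral_add i1 ha.integrable_sq,
      integral_add (hb.integrable_sq.mul_const _) (iab.mul_const _),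
      integral_mul_const, integral_mul_const] at h0
    linarith
  have := discrim_le_zero h
  unfold discrim at this
  nlinarith

lemma tendsto_integral_mul_zero {α : Type*} [MeasurableSpace α] {ν : Measure α}
    {a : ℕ → α → ℝ} {b : α → ℝ} (ha : ∀ n, MemLp (a n) 2 ν) (hb : MemLp b 2 ν)
    (h : Tendsto (fun n => ∫ x, a n x ^ 2 ∂ν) atTop (nhds 0)) :
    Tendsto (fun n => ∫ x, a n x * b x ∂ν) atTop (nhds 0) := by
  have h1 : Tendsto (fun n => (∫ x, a n x ^ 2 ∂ν) * ∫ x, b x ^ 2 ∂ν) atTop (nhds 0) := by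
    simpa using h.mul_const (∫ x, b x ^ 2 ∂ν)
  have h2 : Tendsto (fun n => (∫ x, a n x * b x ∂ν) ^ 2) atTop (nhds 0) :=
    squeeze_zero (fun n => sq_nonneg _) (fun n => sq_integral_mul_le (ha n) hb) h1
  have h3 := h2.sqrt
  simp only [Real.sqrt_sq_eq_abs, Real.sqrt_zero] at h3
  exact (tendsto_zero_iff_abs_tendsto_zero _).2 h3

lemma ae_zero_of_trig {B : Type*} [NormedAddCommGroup B] [NormedSpace ℝ B] [CompleteSpace B]
    [SecondCountableTopology B] [MeasurableSpace B] [BorelSpace B]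
    (μ : Measure B) [IsProbabilityMeasure μ] (Z : B → ℝ) (hZ : Integrable Z μ)
    (h : ∀ φ : B → ℝ, IsCb2 φ → ∫ x, φ x * Z x ∂μ = 0) : Z =ᵐ[μ] 0 := by
  have m1 : AEMeasurable (fun x => ENNReal.ofReal (Z x)) μ := hZ.aemeasurable.ennreal_ofReal
  have m2 : AEMeasurable (fun x => ENNReal.ofReal (-Z x)) μ :=
    hZ.aemeasurable.neg.ennreal_ofReal
  have f1 : ∫⁻ x, ENNReal.ofReal (Z x) ∂μ ≠ ⊤ := (hZ.lintegral_lt_top).ne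
  have f2 : ∫⁻ x, ENNReal.ofReal (-Z x) ∂μ ≠ ⊤ := (hZ.neg.lintegral_lt_top).ne
  have : IsFiniteMeasure (μ.withDensity fun x => ENNReal.ofReal (Z x)) :=
    isFiniteMeasure_withDensity f1
  have : IsFiniteMeasure (μ.withDensity fun x => ENNReal.ofReal (-Z x)) :=
    isFiniteMeasure_withDensity f2
  have key : (μ.withDensity fun x => ENNReal.ofReal (Z x))
      = μ.withDensity fun x => ENNReal.ofReal (-Z x) := by
    apply Measure.ext_of_charFunDual
    ext l
    rw [charFunDual_apply, charFunDual_apply,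
      integral_withDensity_eq_integral_toReal_smul₀ m1 (by simp),
      integral_withDensity_eq_integral_toReal_smul₀ m2 (by simp), ← sub_eq_zero]
    have bd : ∀ x, ‖Complex.exp (l x * Complex.I)‖ ≤ 1 := fun x => by
      rw [Complex.norm_exp_ofReal_mul_I]
    have me : AEStronglyMeasurable (fun x => Complex.exp (l x * Complex.I)) μ := by
      apply Continuous.aestronglyMeasurable
      fun_prop
    have i1 : Integrable (fun x => (ENNReal.ofReal (Z x)).toReal
        • Complex.exp (l x * Complex.I)) μ :=
      (integrable_toReal_of_lintegral_ne_top m1 f1).smul_bdd 1 me (.of_forall bd)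
    have i2 : Integrable (fun x => (ENNReal.ofReal (-Z x)).toReal
        • Complex.exp (l x * Complex.I)) μ :=
      (integrable_toReal_of_lintegral_ne_top m2 f2).smul_bdd 1 me (.of_forall bd)
    rw [← integral_sub i1 i2]
    have ic : Integrable (fun x => Real.cos (l x) * Z x) μ :=
      hZ.bdd_mul (c := 1) (Continuous.aestronglyMeasurable (by fun_prop))
        (.of_forall fun x => Real.abs_cos_le_one _)
    have is : Integrable (fun x => Real.sin (l x) * Z x) μ :=
      hZ.bdd_mul (c := 1) (Continuous.aestronglyMeasurable (by fun_prop))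
        (.of_forall fun x => Real.abs_sin_le_one _)
    have e : ∀ x, (ENNReal.ofReal (Z x)).toReal • Complex.exp (l x * Complex.I)
        - (ENNReal.ofReal (-Z x)).toReal • Complex.exp (l x * Complex.I)
        = ((Real.cos (l x) * Z x : ℝ) : ℂ) + ((Real.sin (l x) * Z x : ℝ) : ℂ) * Complex.I := by
      intro x
      have hz : (ENNReal.ofReal (Z x)).toReal - (ENNReal.ofReal (-Z x)).toReal = Z x := by
        rw [ENNReal.toReal_ofReal', ENNReal.toReal_ofReal']
        rcases le_total (Z x) 0 with h | h
        · rw [max_eq_right h, max_eq_left (by linarith)]; ring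
        · rw [max_eq_left h, max_eq_right (by linarith)]; ring
      rw [← sub_smul, hz, Complex.exp_mul_I, Complex.real_smul]
      push_cast
      ring
    simp only [e]
    rw [integral_add ic.ofReal (is.ofReal.mul_const _), integral_mul_const,
      integral_complex_ofReal, integral_complex_ofReal, h _ (isCb2_cos l), h _ (isCb2_sin l)]
    simp
  rw [withDensity_eq_iff m1 m2 f1] at key
  filter_upwards [key] with x hx
  show Z x = 0
  have := congrArg ENNReal.toReal hx
  rw [ENNReal.toReal_ofReal', ENNReal.toReal_ofReal'] at this
  rcases le_total (Z x) 0 with h | h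
  · rw [max_eq_right h, max_eq_left (by linarith)] at this; linarith
  · rw [max_eq_left h, max_eq_right (by linarith)] at this; linarith

/-- Proposition 1.1: closability of the form `ℰ_k` from the integration by parts formula. -/
theorem closability_of_form_from_integration_by_parts
    {B : Type*} [NormedAddCommGroup B] [NormedSpace ℝ B] [CompleteSpace B]
    [TopologicalSpace.SeparableSpace B] [MeasurableSpace B] [BorelSpace B]
    {Ω : Type*} [MeasurableSpace Ω] (ℙ : Measure Ω) [IsProbabilityMeasure ℙ]
    (X : B × Ω → B) (hX : Measurable X)
    (μ : Measure B) [IsProbabilityMeasure μ]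
    -- invariance of `μ` for the Markov operator `P f (x) = E[f (X^x)]`
    (hinv : ∀ f : B → ℝ, Measurable f → (∃ c, ∀ x, |f x| ≤ c) →
      ∫ x, ∫ ω, f (X (x, ω)) ∂ℙ ∂μ = ∫ x, f x ∂μ)
    (k : B)
    (M : B × Ω → ℝ) (hM : Measurable M)
    -- `M ∈ L²(ℙ × μ)`
    (hM2 : Integrable (fun p => (M p) ^ 2) (μ.prod ℙ))
    -- integration by parts formula: `P (∂_k f) (x) = E[f (X^x) M_x]` for μ-a.e. `x`
    (hIBP : ∀ f : B → ℝ, IsCb2 f →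
      ∀ᵐ x ∂μ, ∫ ω, fderiv ℝ f (X (x, ω)) k ∂ℙ = ∫ ω, f (X (x, ω)) * M (x, ω) ∂ℙ)
    -- a sequence in `C_b²(B)` with `f_n → 0` and `∂_k f_n → Z` in `L²(μ)`
    (f : ℕ → B → ℝ) (hf : ∀ n, IsCb2 (f n))
    (Z : B → ℝ) (hZ : MemLp Z 2 μ)
    (hf0 : Tendsto (fun n => ∫ x, (f n x) ^ 2 ∂μ) atTop (nhds 0))
    (hfZ : Tendsto (fun n => ∫ x, (fderiv ℝ (f n) x k - Z x) ^ 2 ∂μ) atTop (nhds 0)) :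
    Z =ᵐ[μ] 0 := by
  have : SecondCountableTopology B := UniformSpace.secondCountable_of_separable B
  apply ae_zero_of_trig μ Z (hZ.integrable (by norm_num))
  intro φ hφ
  have hmap : (μ.prod ℙ).map X = μ := by
    ext s hs
    have h1 := hinv (s.indicator 1) (measurable_one.indicator hs) ⟨1, fun x => by
      by_cases hx : x ∈ s <;> simp [hx]⟩
    have hm : Measurable (fun p => s.indicator (1 : B → ℝ) (X p)) :=
      (measurable_one.indicator hs).comp hX
    have hi : Integrable (fun p => s.indicator (1 : B → ℝ) (X p)) (μ.prod ℙ) :=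
      Integrable.of_bound hm.aestronglyMeasurable 1 (.of_forall fun p => by
        by_cases hx : X p ∈ s <;> simp [hx])
    rw [← integral_prod _ hi] at h1
    rw [← integral_map hX.aemeasurable
      (f := s.indicator (1 : B → ℝ)) (measurable_one.indicator hs).aestronglyMeasurable,
      integral_indicator_one hs, integral_indicator_one hs] at h1
    have : IsProbabilityMeasure ((μ.prod ℙ).map X) := Measure.isProbabilityMeasure_map hX.aemeasurable
    exact (measureReal_eq_measureReal_iff).1 h1
  have hMp : MemLp M 2 (μ.prod ℙ) := (memLp_two_iff_integrable_sq hM.aestronglyMeasurable).2 hM2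
  have cont : ∀ g : B → ℝ, IsCb2 g → Continuous g := fun g hg => hg.1.continuous
  have contD : ∀ g : B → ℝ, IsCb2 g → Continuous (fun x => fderiv ℝ g x k) := fun g hg =>
    (hg.1.continuous_fderiv (by norm_num)).clm_apply continuous_const
  have bddD : ∀ g : B → ℝ, IsCb2 g → ∃ c, ∀ x, |fderiv ℝ g x k| ≤ c := by
    intro g hg
    obtain ⟨c, hc⟩ := hg.2.2.1
    exact ⟨c * ‖k‖, fun x => ((fderiv ℝ g x).le_opNorm k).trans
      (mul_le_mul_of_nonneg_right (hc x) (norm_nonneg _))⟩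
  have lp : ∀ g : B → ℝ, Continuous g → (∃ c, ∀ x, |g x| ≤ c) → MemLp g 2 μ := by
    rintro g hg ⟨c, hc⟩
    exact MemLp.of_bound hg.aestronglyMeasurable c (.of_forall hc)
  have lpX : ∀ g : B → ℝ, MemLp g 2 μ → MemLp (fun p => g (X p)) 2 (μ.prod ℙ) := by
    intro g hg
    rw [← hmap] at hg
    exact hg.comp_of_map hX.aemeasurable
  have φlp := lp φ (cont φ hφ) hφ.2.1
  have φDlp := lp _ (contD φ hφ) (bddD φ hφ)
  have flp := fun n => lp (f n) (cont _ (hf n)) (hf n).2.1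
  have fDlp := fun n => lp _ (contD _ (hf n)) (bddD _ (hf n))
  have φM : MemLp (fun p => φ (X p) * M p) 2 (μ.prod ℙ) := by
    obtain ⟨c, hc⟩ := hφ.2.1
    refine MemLp.of_le_mul (c := c) hMp
      (((cont φ hφ).measurable.comp hX).mul hM).aestronglyMeasurable (.of_forall fun p => ?_)
    rw [norm_mul]
    exact mul_le_mul_of_nonneg_right (hc _) (norm_nonneg _)
  have ibp : ∀ n, ∫ p, f n (X p) * (φ (X p) * M p) ∂(μ.prod ℙ)
      = ∫ x, f n x * fderiv ℝ φ x k ∂μ + ∫ x, fderiv ℝ (f n) x k * φ x ∂μ := by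
    intro n
    have hg := (hf n).mul hφ
    have h1 := hinv _ (contD _ hg).measurable (bddD _ hg)
    rw [integral_congr_ae (hIBP _ hg)] at h1
    have hi : Integrable (fun p => f n (X p) * φ (X p) * M p) (μ.prod ℙ) := by
      have := (lpX _ (flp n)).integrable_mul φM
      refine this.congr (.of_forall fun p => ?_)
      simp [mul_assoc]
    rw [← integral_prod _ hi] at h1
    simp only [mul_assoc] at h1
    have i1 : Integrable (fun x => f n x * fderiv ℝ φ x k) μ := (flp n).integrable_mul φDlp
    have i2 : Integrable (fun x => fderiv ℝ (f n) x k * φ x) μ := (fDlp n).integrable_mul φlp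
    rw [h1, ← integral_add i1 i2]
    refine integral_congr_ae (.of_forall fun x => ?_)
    simp only
    rw [fderiv_fun_mul (((hf n).1.differentiable (by norm_num)) x)
      ((hφ.1.differentiable (by norm_num)) x)]
    simp [mul_comm]
  have t1 : Tendsto (fun n => ∫ p, f n (X p) * (φ (X p) * M p) ∂(μ.prod ℙ)) atTop (nhds 0) := by
    refine tendsto_integral_mul_zero (fun n => lpX _ (flp n)) φM (hf0.congr fun n => ?_)
    have hc : Continuous fun x => f n x ^ 2 := (cont _ (hf n)).pow 2
    conv_lhs => rw [← hmap]
    exact integral_map hX.aemeasurable hc.aestronglyMeasurable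
  have t2 := tendsto_integral_mul_zero flp φDlp hf0
  have t3 := tendsto_integral_mul_zero (fun n => (fDlp n).sub hZ) φlp hfZ
  have t4 := (t1.sub t2).sub t3
  simp only [sub_zero] at t4
  refine tendsto_nhds_unique (tendsto_const_nhds.congr fun n => ?_) t4
  have iZ : Integrable (fun x => φ x * Z x) μ := φlp.integrable_mul hZ
  have e : ∫ x, ((fun x => fderiv ℝ (f n) x k) - Z) x * φ x ∂μ
      = ∫ x, fderiv ℝ (f n) x k * φ x ∂μ - ∫ x, φ x * Z x ∂μ := by
    have i2 : Integrable (fun x => fderiv ℝ (f n) x k * φ x) μ := (fDlp n).integrable_mul φlp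
    rw [← integral_sub i2 iZ]
    refine integral_congr_ae (.of_forall fun x => ?_)
    simp only [Pi.sub_apply]
    ring
  rw [e, ibp n]
  ring
end

section
/- Let B be a real separable Banach space, μ a probability measure on B, k ∈ B, and C ≥ 0 a constant such that |∫_B ∂_k h dμ| ≤ C (∫_B h² dμ)^{1/2} for every h ∈ C_b²(B). Then the form (ℰ_k, C_b²(B)) is closable in L²(μ): whenever a sequence (f_n) ⊂ C_b²(B) satisfies f_n → 0 in L²(μ) and ∂_k f_n → Z in L²(μ) for some Z ∈ L²(μ), one has Z = 0 in L²(μ). -/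
open MeasureTheory Filter

lemma aux_isCb2_comp {B : Type*} [NormedAddCommGroup B] [NormedSpace ℝ B] (L : B →L[ℝ] ℝ)
    (p p' p'' : ℝ → ℝ) (hc : ContDiff ℝ 2 p) (h1 : ∀ t, HasDerivAt p (p' t) t)
    (h2 : ∀ t, HasDerivAt p' (p'' t) t) (b0 : ∀ t, |p t| ≤ 1) (b1 : ∀ t, |p' t| ≤ 1)
    (b2 : ∀ t, |p'' t| ≤ 1) : IsCb2 (fun x => p (L x)) := by
  have e1 : ∀ x, HasFDerivAt (fun x => p (L x)) (p' (L x) • L) x := fun x =>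
    (h1 (L x)).comp_hasFDerivAt x L.hasFDerivAt
  have e1' : fderiv ℝ (fun x => p (L x)) = fun x => p' (L x) • L := by
    funext x; exact (e1 x).fderiv
  have e2 : ∀ x, HasFDerivAt (fun x => p' (L x) • L) ((p'' (L x) • L).smulRight L) x := fun x =>
    ((h2 (L x)).comp_hasFDerivAt x L.hasFDerivAt).smul_const L
  refine ⟨hc.comp L.contDiff, ⟨1, fun x => b0 _⟩, ⟨1 * ‖L‖, fun x => ?_⟩,
    ⟨(1 * ‖L‖) * ‖L‖, fun x => ?_⟩⟩
  · rw [e1', norm_smul]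
    gcongr
    exact b1 _
  · rw [e1', (e2 x).fderiv, ContinuousLinearMap.norm_smulRight_apply, norm_smul]
    gcongr
    exact b2 _

lemma aux_smul_bound {B F : Type*} [NormedAddCommGroup B] [NormedSpace ℝ B]
    [NormedAddCommGroup F] [NormedSpace ℝ F] (c : B → ℝ) (d : B → F) (hc : Differentiable ℝ c)
    (hd : Differentiable ℝ d) (hc0 : ∃ a, ∀ x, |c x| ≤ a) (hc1 : ∃ a, ∀ x, ‖fderiv ℝ c x‖ ≤ a)
    (hd0 : ∃ a, ∀ x, ‖d x‖ ≤ a) (hd1 : ∃ a, ∀ x, ‖fderiv ℝ d x‖ ≤ a) :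
    ∃ a, ∀ x, ‖fderiv ℝ (c • d) x‖ ≤ a := by
  obtain ⟨a0, h0⟩ := hc0
  obtain ⟨a1, h1⟩ := hc1
  obtain ⟨a2, h2⟩ := hd0
  obtain ⟨a3, h3⟩ := hd1
  refine ⟨a0 * a3 + a1 * a2, fun x => ?_⟩
  rw [((hc x).hasFDerivAt.smul (hd x).hasFDerivAt).fderiv]
  refine (norm_add_le _ _).trans ?_
  rw [norm_smul, ContinuousLinearMap.norm_smulRight_apply]
  have p0 := (abs_nonneg _).trans (h0 x)
  have p1 := (norm_nonneg _).trans (h1 x)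
  gcongr
  · exact h0 x
  · exact h3 x
  · exact h1 x
  · exact h2 x

lemma aux_fderiv_mul {B : Type*} [NormedAddCommGroup B] [NormedSpace ℝ B] {f g : B → ℝ}
    (hf : Differentiable ℝ f) (hg : Differentiable ℝ g) :
    fderiv ℝ (f • g) = f • fderiv ℝ g + g • fderiv ℝ f := by
  funext x
  rw [((hf x).hasFDerivAt.smul (hg x).hasFDerivAt).fderiv]
  ext v
  simp [mul_comm]

lemma aux_isCb2_mul {B : Type*} [NormedAddCommGroup B] [NormedSpace ℝ B] {f g : B → ℝ}
    (hf : IsCb2 f) (hg : IsCb2 g) : IsCb2 (f • g) := by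
  obtain ⟨f0, f1, f2, f3⟩ := hf
  obtain ⟨g0, g1, g2, g3⟩ := hg
  have df : Differentiable ℝ f := f0.differentiable (by norm_num)
  have dg : Differentiable ℝ g := g0.differentiable (by norm_num)
  have ddf : Differentiable ℝ (fderiv ℝ f) :=
    (f0.fderiv_right (m := 1) (by norm_num)).differentiable (by norm_num)
  have ddg : Differentiable ℝ (fderiv ℝ g) :=
    (g0.fderiv_right (m := 1) (by norm_num)).differentiable (by norm_num)
  refine ⟨f0.smul g0, ?_, aux_smul_bound f g df dg f1 f2 g1 g2, ?_⟩
  · obtain ⟨a, ha⟩ := f1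
    obtain ⟨b, hb⟩ := g1
    refine ⟨a * b, fun x => ?_⟩
    simp only [Pi.smul_apply', smul_eq_mul, abs_mul]
    have p0 := (abs_nonneg _).trans (ha x)
    gcongr
    · exact ha x
    · exact hb x
  · obtain ⟨a, ha⟩ := aux_smul_bound f (fderiv ℝ g) df ddg f1 f2 g2 g3
    obtain ⟨b, hb⟩ := aux_smul_bound g (fderiv ℝ f) dg ddf g1 g2 f2 f3
    refine ⟨a + b, fun x => ?_⟩
    rw [aux_fderiv_mul df dg, fderiv_add ((df x).smul (ddg x)) ((dg x).smul (ddf x))]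
    exact (norm_add_le _ _).trans (add_le_add (ha x) (hb x))

lemma aux_cs {B : Type*} [MeasurableSpace B] (μ : Measure B) [IsProbabilityMeasure μ]
    (u g : B → ℝ) (M : ℝ) (hu : MemLp u 2 μ) (hg : ∀ x, |g x| ≤ M) :
    |∫ x, u x * g x ∂μ| ≤ M * Real.sqrt (∫ x, (u x) ^ 2 ∂μ) := by
  have hi : Integrable u μ := hu.integrable (by norm_num)
  obtain ⟨x0⟩ : Nonempty B := μ.nonempty_of_neZero
  have hM : 0 ≤ M := (abs_nonneg _).trans (hg x0)
  have h1 : |∫ x, u x * g x ∂μ| ≤ ∫ x, M * |u x| ∂μ := by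
    rw [← Real.norm_eq_abs]
    refine norm_integral_le_of_norm_le (hi.abs.const_mul M) (ae_of_all _ fun x => ?_)
    rw [Real.norm_eq_abs, abs_mul, mul_comm]
    gcongr
    exact hg x
  rw [integral_const_mul] at h1
  refine h1.trans ?_
  gcongr
  apply Real.le_sqrt_of_sq_le
  have hv := ProbabilityTheory.variance_nonneg |u| μ
  rw [ProbabilityTheory.variance_eq_sub hu.abs] at hv
  simp only [Pi.pow_apply, Pi.abs_apply, sq_abs] at hv
  linarith

lemma aux_orth {B : Type*} [NormedAddCommGroup B] [NormedSpace ℝ B]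
    [MeasurableSpace B] [BorelSpace B]
    (μ : Measure B) [IsProbabilityMeasure μ]
    (k : B) (C : ℝ) (hC : 0 ≤ C)
    (hbound : ∀ h : B → ℝ, IsCb2 h →
      |∫ x, fderiv ℝ h x k ∂μ| ≤ C * Real.sqrt (∫ x, (h x) ^ 2 ∂μ))
    (f : ℕ → B → ℝ) (hf : ∀ n, IsCb2 (f n))
    (Z : B → ℝ) (hZ : MemLp Z 2 μ)
    (hf0 : Tendsto (fun n => ∫ x, (f n x) ^ 2 ∂μ) atTop (nhds 0))
    (hfZ : Tendsto (fun n => ∫ x, (fderiv ℝ (f n) x k - Z x) ^ 2 ∂μ) atTop (nhds 0))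
    (g : B → ℝ) (hg : IsCb2 g) : ∫ x, Z x * g x ∂μ = 0 := by
  have m0 : ∀ h : B → ℝ, IsCb2 h → MemLp h 2 μ := by
    rintro h ⟨h0, ⟨c, hc⟩, -, -⟩
    exact MemLp.of_bound h0.continuous.aestronglyMeasurable c (ae_of_all _ hc)
  have b1 : ∀ h : B → ℝ, IsCb2 h → ∃ M, ∀ x, |fderiv ℝ h x k| ≤ M := by
    rintro h ⟨h0, -, ⟨c, hc⟩, -⟩
    refine ⟨c * ‖k‖, fun x => ((fderiv ℝ h x).le_opNorm k).trans ?_⟩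
    gcongr
    exact hc x
  have m1 : ∀ h : B → ℝ, IsCb2 h → MemLp (fun x => fderiv ℝ h x k) 2 μ := by
    intro h hh
    obtain ⟨c, hc⟩ := b1 h hh
    have : Continuous (fun x => fderiv ℝ h x k) :=
      (hh.1.continuous_fderiv (by norm_num)).clm_apply continuous_const
    exact MemLp.of_bound this.aestronglyMeasurable c (ae_of_all _ hc)
  obtain ⟨M, hM⟩ := hg.2.1
  obtain ⟨M', hM'⟩ := b1 g hg
  have hM0 : 0 ≤ M := (abs_nonneg _).trans (hM 0)
  have dif : ∀ h : B → ℝ, IsCb2 h → Differentiable ℝ h := fun h hh =>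
    hh.1.differentiable (by norm_num)
  have key : ∀ n, |∫ x, Z x * g x ∂μ| ≤
      M * Real.sqrt (∫ x, (fderiv ℝ (f n) x k - Z x) ^ 2 ∂μ)
      + (C * M + M') * Real.sqrt (∫ x, (f n x) ^ 2 ∂μ) := by
    intro n
    have i1 := aux_cs μ _ g M ((m1 _ (hf n)).sub hZ) hM
    have i2 := aux_cs μ _ _ M' (m0 _ (hf n)) hM'
    have i3 := hbound _ (aux_isCb2_mul (hf n) hg)
    have i4 : Real.sqrt (∫ x, ((f n • g) x) ^ 2 ∂μ) ≤ M * Real.sqrt (∫ x, (f n x) ^ 2 ∂μ) := by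
      rw [← Real.sqrt_sq hM0, ← Real.sqrt_mul (sq_nonneg _), ← integral_const_mul]
      apply Real.sqrt_le_sqrt
      refine integral_mono (m0 _ (aux_isCb2_mul (hf n) hg)).integrable_sq
        ((m0 _ (hf n)).integrable_sq.const_mul _) fun x => ?_
      simp only [Pi.smul_apply', smul_eq_mul, mul_pow]
      rw [mul_comm]
      exact mul_le_mul_of_nonneg_right (sq_le_sq' (abs_le.mp (hM x)).1 (abs_le.mp (hM x)).2)
        (sq_nonneg _)
    rw [aux_fderiv_mul (dif _ (hf n)) (dif _ hg)] at i3
    have j1 : Integrable (fun x => f n x * fderiv ℝ g x k) μ :=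
      (m0 _ (hf n)).integrable_mul (m1 _ hg)
    have j2 : Integrable (fun x => fderiv ℝ (f n) x k * g x) μ :=
      (m1 _ (hf n)).integrable_mul (m0 _ hg)
    have j3 : Integrable (fun x => Z x * g x) μ := hZ.integrable_mul (m0 _ hg)
    have e3 : ∫ x, (f n • fderiv ℝ g + g • fderiv ℝ (f n)) x k ∂μ
        = ∫ x, f n x * fderiv ℝ g x k ∂μ + ∫ x, fderiv ℝ (f n) x k * g x ∂μ := by
      rw [← integral_add j1 j2]
      congr 1
      funext x
      simp [mul_comm]
    have e1 : ∫ x, ((fun x => fderiv ℝ (f n) x k) - Z) x * g x ∂μ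
        = ∫ x, fderiv ℝ (f n) x k * g x ∂μ - ∫ x, Z x * g x ∂μ := by
      rw [← integral_sub j2 j3]
      congr 1
      funext x
      simp [sub_mul]
    rw [e3] at i3
    rw [e1] at i1
    simp only [Pi.sub_apply] at i1
    have i5 := i3.trans (mul_le_mul_of_nonneg_left i4 hC)
    rw [abs_le] at i1 i2 i5 ⊢
    constructor <;> nlinarith
  have lim : Tendsto (fun n => M * Real.sqrt (∫ x, (fderiv ℝ (f n) x k - Z x) ^ 2 ∂μ)
      + (C * M + M') * Real.sqrt (∫ x, (f n x) ^ 2 ∂μ)) atTop (nhds 0) := by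
    have := (hfZ.sqrt.const_mul M).add (hf0.sqrt.const_mul (C * M + M'))
    simpa using this
  have := ge_of_tendsto' lim key
  exact abs_eq_zero.mp (le_antisymm this (abs_nonneg _))

/-- If `|μ(∂_k h)| ≤ C ‖h‖_{L²(μ)}` for all `h ∈ C_b²(B)`, then the form `(ℰ_k, C_b²(B))`
is closable in `L²(μ)`. -/
theorem closability_of_form_from_fomin_estimate
    {B : Type*} [NormedAddCommGroup B] [NormedSpace ℝ B] [CompleteSpace B]
    [TopologicalSpace.SeparableSpace B] [MeasurableSpace B] [BorelSpace B]
    (μ : Measure B) [IsProbabilityMeasure μ]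
    (k : B) (C : ℝ) (hC : 0 ≤ C)
    (hbound : ∀ h : B → ℝ, IsCb2 h →
      |∫ x, fderiv ℝ h x k ∂μ| ≤ C * Real.sqrt (∫ x, (h x) ^ 2 ∂μ))
    -- a sequence in `C_b²(B)` with `f_n → 0` and `∂_k f_n → Z` in `L²(μ)`
    (f : ℕ → B → ℝ) (hf : ∀ n, IsCb2 (f n))
    (Z : B → ℝ) (hZ : MemLp Z 2 μ)
    (hf0 : Tendsto (fun n => ∫ x, (f n x) ^ 2 ∂μ) atTop (nhds 0))
    (hfZ : Tendsto (fun n => ∫ x, (fderiv ℝ (f n) x k - Z x) ^ 2 ∂μ) atTop (nhds 0)) :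
    Z =ᵐ[μ] 0 := by
  have orth := aux_orth μ k C hC hbound f hf Z hZ hf0 hfZ
  have hZi : Integrable Z μ := hZ.integrable (by norm_num)
  have : SecondCountableTopology B := UniformSpace.secondCountable_of_separable B
  have mp : AEMeasurable (fun x => ENNReal.ofReal (Z x)) μ := hZi.aemeasurable.ennreal_ofReal
  have mn : AEMeasurable (fun x => ENNReal.ofReal (-Z x)) μ :=
    hZi.aemeasurable.neg.ennreal_ofReal
  have : IsFiniteMeasure (μ.withDensity fun x => ENNReal.ofReal (Z x)) :=
    isFiniteMeasure_withDensity_ofReal hZi.2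
  have : IsFiniteMeasure (μ.withDensity fun x => ENNReal.ofReal (-Z x)) :=
    isFiniteMeasure_withDensity_ofReal hZi.neg.2
  have hcos : ∀ L : B →L[ℝ] ℝ, ∫ x, Z x * Real.cos (L x) ∂μ = 0 := fun L =>
    orth _ (aux_isCb2_comp L Real.cos (fun t => -Real.sin t) (fun t => -Real.cos t)
      Real.contDiff_cos Real.hasDerivAt_cos (fun t => (Real.hasDerivAt_sin t).neg)
      Real.abs_cos_le_one (fun t => by rw [abs_neg]; exact Real.abs_sin_le_one t)
      (fun t => by rw [abs_neg]; exact Real.abs_cos_le_one t))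
  have hsin : ∀ L : B →L[ℝ] ℝ, ∫ x, Z x * Real.sin (L x) ∂μ = 0 := fun L =>
    orth _ (aux_isCb2_comp L Real.sin Real.cos (fun t => -Real.sin t)
      Real.contDiff_sin Real.hasDerivAt_sin Real.hasDerivAt_cos
      Real.abs_sin_le_one Real.abs_cos_le_one
      (fun t => by rw [abs_neg]; exact Real.abs_sin_le_one t))
  have heq : (μ.withDensity fun x => ENNReal.ofReal (Z x))
      = μ.withDensity fun x => ENNReal.ofReal (-Z x) := by
    apply Measure.ext_of_charFunDual
    ext L
    rw [charFunDual_apply, charFunDual_apply,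
      integral_withDensity_eq_integral_toReal_smul₀ mp (by simp),
      integral_withDensity_eq_integral_toReal_smul₀ mn (by simp), ← sub_eq_zero]
    have bnd : ∀ u : B → ℝ, Integrable u μ →
        Integrable (fun x => u x • Complex.exp (L x * Complex.I)) μ := by
      intro u hu
      refine hu.mono (hu.1.smul (by fun_prop : Continuous
        fun x => Complex.exp (L x * Complex.I)).aestronglyMeasurable) (ae_of_all _ fun x => ?_)
      rw [norm_smul, Complex.norm_exp_ofReal_mul_I, mul_one]
    have q1 : Integrable (fun x => (ENNReal.ofReal (Z x)).toReal) μ := hZi.real_toNNReal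
    have q2 : Integrable (fun x => (ENNReal.ofReal (-Z x)).toReal) μ := hZi.neg.real_toNNReal
    rw [← integral_sub (bnd _ q1) (bnd _ q2)]
    have ic : Integrable (fun x => Z x * Real.cos (L x)) μ :=
      hZi.mul_bdd (c := 1) (by fun_prop : Continuous fun x => Real.cos (L x)).aestronglyMeasurable
        (ae_of_all _ fun x => Real.abs_cos_le_one _)
    have is : Integrable (fun x => Z x * Real.sin (L x)) μ :=
      hZi.mul_bdd (c := 1) (by fun_prop : Continuous fun x => Real.sin (L x)).aestronglyMeasurable
        (ae_of_all _ fun x => Real.abs_sin_le_one _)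
    have : ∀ x, (ENNReal.ofReal (Z x)).toReal • Complex.exp (L x * Complex.I)
        - (ENNReal.ofReal (-Z x)).toReal • Complex.exp (L x * Complex.I)
        = ((Z x * Real.cos (L x) : ℝ) : ℂ) + ((Z x * Real.sin (L x) : ℝ) : ℂ) * Complex.I := by
      intro x
      rw [← sub_smul, ENNReal.toReal_ofReal', ENNReal.toReal_ofReal',
        max_zero_sub_max_neg_zero_eq_self, Complex.exp_mul_I, Complex.real_smul]
      push_cast
      ring
    refine (integral_congr_ae (ae_of_all _ this)).trans ?_
    rw [integral_add ic.ofReal (is.ofReal.mul_const _), integral_mul_const, integral_complex_ofReal,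
      integral_complex_ofReal, hcos, hsin]
    simp
  rw [withDensity_eq_iff_of_sigmaFinite mp mn] at heq
  filter_upwards [heq] with x hx
  have := congrArg ENNReal.toReal hx
  rw [ENNReal.toReal_ofReal', ENNReal.toReal_ofReal'] at this
  have h2 := max_zero_sub_max_neg_zero_eq_self (Z x)
  rcases le_total 0 (Z x) with h | h
  · rw [max_eq_left h, max_eq_right (by linarith)] at this
    simpa using this
  · rw [max_eq_right h, max_eq_left (by linarith)] at this
    simp; linarith
end

section
/- Let H be a real separable Hilbert space with orthonormal basis (e_i)_{i≥1}, let (λ_i)_{i≥1} be positive reals, let μ be a probability measure on H, and let (c_i)_{i≥1} be nonnegative reals such that for every i and every f ∈ C_b¹(H): |∫_H Df(x)[e_i] μ(dx)| ≤ c_i (∫_H f² dμ)^{1/2}. Assume C² := Σ_{i≥1} c_i²/λ_i² < ∞. Then for every k ∈ H with Σ_{i≥1} λ_i² ⟨k, e_i⟩² < ∞ and every f ∈ C_b¹(H): |∫_H Df(x)[k] μ(dx)| ≤ C · (Σ_{i≥1} λ_i² ⟨k, e_i⟩²)^{1/2} · (∫_H f² dμ)^{1/2}. -/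
open MeasureTheory Filter

/-- `f ∈ C_b¹(H)`: `f` is continuously Fréchet differentiable, bounded, with bounded
Fréchet derivative. -/
def IsCb1 {H : Type*} [NormedAddCommGroup H] [NormedSpace ℝ H] (f : H → ℝ) : Prop :=
  ContDiff ℝ 1 f ∧ (∃ c, ∀ x, |f x| ≤ c) ∧ (∃ c, ∀ x, ‖fderiv ℝ f x‖ ≤ c)

/-- Summation of directionwise Fomin estimates along an orthonormal basis:
if `|μ(∂_{e_i} f)| ≤ c_i ‖f‖_{L²(μ)}` for every `i` and `C² := Σ_i c_i²/λ_i² < ∞`, then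
`|μ(∂_k f)| ≤ C (Σ_i λ_i² ⟨k,e_i⟩²)^{1/2} ‖f‖_{L²(μ)}`. -/
theorem fomin_estimate_along_basis_directions
    {H : Type*} [NormedAddCommGroup H] [InnerProductSpace ℝ H] [CompleteSpace H]
    [TopologicalSpace.SeparableSpace H] [MeasurableSpace H] [BorelSpace H]
    (e : HilbertBasis ℕ ℝ H)
    (lam : ℕ → ℝ) (hlam : ∀ i, 0 < lam i)
    (μ : Measure H) [IsProbabilityMeasure μ]
    (c : ℕ → ℝ) (hc : ∀ i, 0 ≤ c i)
    (hbound : ∀ (i : ℕ) (f : H → ℝ), IsCb1 f →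
      |∫ x, fderiv ℝ f x (e i) ∂μ| ≤ c i * Real.sqrt (∫ x, (f x) ^ 2 ∂μ))
    (hC : Summable (fun i => (c i) ^ 2 / (lam i) ^ 2))
    (k : H) (hk : Summable (fun i => (lam i) ^ 2 * (inner ℝ k (e i) : ℝ) ^ 2))
    (f : H → ℝ) (hf : IsCb1 f) :
    |∫ x, fderiv ℝ f x k ∂μ| ≤
      Real.sqrt (∑' i, (c i) ^ 2 / (lam i) ^ 2) *
        (Real.sqrt (∑' i, (lam i) ^ 2 * (inner ℝ k (e i) : ℝ) ^ 2) *
          Real.sqrt (∫ x, (f x) ^ 2 ∂μ)) := by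
  obtain ⟨hf1, hf2, M, hM⟩ := id hf
  have hint : ∀ v : H, Integrable (fun x => fderiv ℝ f x v) μ := by
    intro v
    have hcont : Continuous (fun x => fderiv ℝ f x v) :=
      (hf1.continuous_fderiv (by norm_num)).clm_apply continuous_const
    refine Integrable.of_bound hcont.measurable.aestronglyMeasurable (M * ‖v‖)
      (Eventually.of_forall fun x => ?_)
    exact (fderiv ℝ f x).le_of_opNorm_le (hM x) v
  let L0 : H →ₗ[ℝ] ℝ :=
    { toFun := fun v => ∫ x, fderiv ℝ f x v ∂μ
      map_add' := fun v w => by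
        simp only [map_add]
        exact integral_add (hint v) (hint w)
      map_smul' := fun a v => by
        simp only [map_smul, smul_eq_mul, RingHom.id_apply]
        exact integral_const_mul a _ }
  let L : H →L[ℝ] ℝ := L0.mkContinuous M (fun v => by
    have h := norm_integral_le_of_norm_le_const (μ := μ) (f := fun x => fderiv ℝ f x v)
      (C := M * ‖v‖)
      (Eventually.of_forall fun x => (fderiv ℝ f x).le_of_opNorm_le (hM x) v)
    rw [probReal_univ, mul_one] at h
    exact h)
  have hL : ∀ v, L v = ∫ x, fderiv ℝ f x v ∂μ := fun v => rfl
  have hs := (e.hasSum_repr k).mapL L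
  have ht : Tendsto (fun F : Finset ℕ => |∑ i ∈ F, L (e.repr k i • e i)|) atTop
      (nhds |L k|) := (continuous_abs.tendsto _).comp hs
  rw [← hL k]
  refine le_of_tendsto ht (Eventually.of_forall fun F => ?_)
  set s := Real.sqrt (∫ x, (f x) ^ 2 ∂μ) with hsdef
  have hs0 : 0 ≤ s := Real.sqrt_nonneg _
  have h1 : |∑ i ∈ F, L (e.repr k i • e i)|
      ≤ (∑ i ∈ F, (c i / lam i) * (lam i * |inner ℝ k (e i)|)) * s := by
    rw [Finset.sum_mul]
    refine (Finset.abs_sum_le_sum_abs _ _).trans (Finset.sum_le_sum fun i _ => ?_)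
    rw [map_smul, smul_eq_mul, abs_mul, e.repr_apply_apply, real_inner_comm, hL]
    have := mul_le_mul_of_nonneg_left (hbound i f hf) (abs_nonneg (inner ℝ k (e i)))
    refine this.trans (le_of_eq ?_)
    have := (hlam i).ne'
    rw [← hsdef]
    field_simp
  have h2 := Real.sum_mul_le_sqrt_mul_sqrt F (fun i => c i / lam i)
    (fun i => lam i * |inner ℝ k (e i)|)
  simp only [div_pow, mul_pow, sq_abs] at h2
  have h3 : Real.sqrt (∑ i ∈ F, c i ^ 2 / lam i ^ 2)
      ≤ Real.sqrt (∑' i, (c i) ^ 2 / (lam i) ^ 2) :=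
    Real.sqrt_le_sqrt (hC.sum_le_tsum F fun i _ => by positivity)
  have h4 : Real.sqrt (∑ i ∈ F, lam i ^ 2 * (inner ℝ k (e i) : ℝ) ^ 2)
      ≤ Real.sqrt (∑' i, (lam i) ^ 2 * (inner ℝ k (e i) : ℝ) ^ 2) :=
    Real.sqrt_le_sqrt (hk.sum_le_tsum F fun i _ => by positivity)
  rw [← mul_assoc]
  refine h1.trans (mul_le_mul_of_nonneg_right (h2.trans ?_) hs0)
  exact mul_le_mul h3 h4 (Real.sqrt_nonneg _) (Real.sqrt_nonneg _)
end
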